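/- arXiv:1811.09505 — 2 statements merged into one kernel-verified Lean document; each statement's English description precedes it below -/
import Mathlib

section
/- Let ĥ₁ ≤ ĥ₂ ≤ ĥ₃ be real numbers with ĥ₁ < 0 and ĥ₁ + ĥ₂ + ĥ₃ ≥ 0. Define h₁ˡⁱᵐ = 0, h₂ˡⁱᵐ = max{0, ĥ₂ − (h₁ˡⁱᵐ − ĥ₁)/2}, and h₃ˡⁱᵐ = ĥ₃ − (h₁ˡⁱᵐ − ĥ₁) − (h₂ˡⁱᵐ − ĥ₂). Then h₁ˡⁱᵐ ≥ 0, h₂ˡⁱᵐ ≥ 0 and h₃ˡⁱᵐ ≥ 0; i.e., the positive-depth operator produces nonnegative nodal values whenever the cell mean of the fluid depth is nonnegative. -/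
/-!
Raising the lowest vertex from `ĥ₁` to `0` adds the deficit `d = -ĥ₁`, which the operator takes back
from the other two vertices: `d / 2` from each, or, if that would make the middle vertex negative,
the middle vertex is set to `0` and the top one absorbs the rest. The top vertex is therefore left
with the smaller of `ĥ₂ + ĥ₃ - d` and `ĥ₃ - d / 2`. The first is the sum of the nodal values, and
the second is at least half the first because `ĥ₂ ≤ ĥ₃`.
-/

theorem sub_sub_max_sub_eq_min {G : Type*} [AddCommGroup G] [LinearOrder G] [IsOrderedAddMonoid G]
    (a b d x : G) :
    b - d - (max 0 (a - x) - a) = min (a + b - d) (b - (d - x)) :=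
  calc
    b - d - (max 0 (a - x) - a) = (a + b - d) - max 0 (a - x) := by abel
    _ = min (a + b - d - 0) (a + b - d - (a - x)) := (min_sub_sub_left _ _ _).symm
    _ = min (a + b - d) (b - (d - x)) := by congr 1 <;> abel

theorem positive_depth_operator_nonneg_general {K : Type*} [Field K] [LinearOrder K]
    [IsStrictOrderedRing K] (hhat₁ hhat₂ hhat₃ : K) (h23 : hhat₂ ≤ hhat₃)
    (hmean : 0 ≤ hhat₁ + hhat₂ + hhat₃)
    (hlim₁ hlim₂ hlim₃ : K)
    (H1 : hlim₁ = 0)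
    (H2 : hlim₂ = max 0 (hhat₂ - (hlim₁ - hhat₁) / 2))
    (H3 : hlim₃ = hhat₃ - (hlim₁ - hhat₁) - (hlim₂ - hhat₂)) :
    0 ≤ hlim₁ ∧ 0 ≤ hlim₂ ∧ 0 ≤ hlim₃ := by
  subst H1 H2 H3
  have deficit_le : 0 - hhat₁ ≤ hhat₂ + hhat₃ := by linarith
  have half_deficit_le : (0 - hhat₁) - (0 - hhat₁) / 2 ≤ hhat₃ :=
    calc
      (0 - hhat₁) - (0 - hhat₁) / 2 = (0 - hhat₁) / 2 := sub_half _
      _ ≤ (hhat₂ + hhat₃) / 2 := by gcongr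
      _ ≤ (hhat₃ + hhat₃) / 2 := by gcongr
      _ = hhat₃ := add_self_div_two _
  refine ⟨le_rfl, le_max_left _ _, ?_⟩
  rw [sub_sub_max_sub_eq_min]
  exact le_min (sub_nonneg.2 deficit_le) (sub_nonneg.2 half_deficit_le)

/-- The positive-depth operator of Bunya et al. produces nonnegative nodal values
whenever the cell mean of the fluid depth is nonnegative. -/
theorem positive_depth_operator_nonneg
    (hhat₁ hhat₂ hhat₃ : ℝ) (h12 : hhat₁ ≤ hhat₂) (h23 : hhat₂ ≤ hhat₃)
    (hneg : hhat₁ < 0) (hmean : 0 ≤ hhat₁ + hhat₂ + hhat₃)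
    (hlim₁ hlim₂ hlim₃ : ℝ)
    (H1 : hlim₁ = 0)
    (H2 : hlim₂ = max 0 (hhat₂ - (hlim₁ - hhat₁) / 2))
    (H3 : hlim₃ = hhat₃ - (hlim₁ - hhat₁) - (hlim₂ - hhat₂)) :
    0 ≤ hlim₁ ∧ 0 ≤ hlim₂ ∧ 0 ≤ hlim₃ := by
  exact positive_depth_operator_nonneg_general hhat₁ hhat₂ hhat₃ h23 hmean hlim₁ hlim₂ hlim₃
    H1 H2 H3
end

section
/- Let g > 0, H₀ > 0, 0 < r₀ < a, set A = (a⁴ − r₀⁴)/(a⁴ + r₀⁴) and ω = √(8 g H₀)/a, and define D(t) = 1 − A cos(ωt), the bathymetry b(x,y) = H₀ (x² + y²)/a², the fluid depth h(x,y,t) = H₀ ( √(1 − A²)/D(t) − (x² + y²)(1 − A²)/(a² D(t)²) ), and the velocity field (u,v)(x,y,t) = (ω A sin(ωt))/(2 D(t)) · (x, y). Then at every point (x,y,t) with h(x,y,t) > 0 these functions satisfy the two-dimensional shallow water equations: ∂_t h + ∂_x(hu) + ∂_y(hv) = 0; ∂_t(hu) + ∂_x(hu² + (g/2)h²) + ∂_y(huv)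 = −g h ∂_x b; ∂_t(hv) + ∂_x(huv) + ∂_y(hv² + (g/2)h²) = −g h ∂_y b; i.e., the radially symmetric long-wave resonance solution of Thacker in a paraboloid basin is an exact solution of the shallow water equations in the wet region. -/
/-!
Where the depth, the velocity and the bathymetry are differentiable, the conservative momentum
equations are the advective ones multiplied by the depth plus the velocity times the mass equation.
For a depth `P - Q r²`, a velocity `K (x, y)` and a bathymetry `β r²` the advective system reduces
to three ordinary differential equations for `P`, `Q` and `K`. They are solved by `P = c / D`,
`Q = q / D²`, `K = D' / (2 D)` as soon as `2 D D'' = D'² + 8 g (q - β D²)`, the equation satisfied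
by the square of a solution of an Ermakov equation `R'' + 2 g β R = 2 g q / R³`. Thacker's solution
is the case `D = 1 - A cos ωt`, `q = β (1 - A²)`, `ω² = 8 g β`.
-/

/-- Classical solution of the shallow water equations at one point: depth `h` and velocity `(u, v)`,
as functions of `x y t`, over the bathymetry `b`. Differentiability is part of the notion, so that
none of the derivatives takes the junk value `0`. -/
structure IsShallowWaterSolutionAt (g : ℝ) (b : ℝ → ℝ → ℝ) (h u v : ℝ → ℝ → ℝ → ℝ)
    (x y t : ℝ) : Prop where
  differentiableAt_bathymetry : DifferentiableAt ℝ ↿b (x, y)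
  differentiableAt_depth : DifferentiableAt ℝ ↿h (x, y, t)
  differentiableAt_velocity_x : DifferentiableAt ℝ ↿u (x, y, t)
  differentiableAt_velocity_y : DifferentiableAt ℝ ↿v (x, y, t)
  mass : deriv (fun τ => h x y τ) t
    + deriv (fun s => h s y t * u s y t) x
    + deriv (fun s => h x s t * v x s t) y = 0
  momentum_x : deriv (fun τ => h x y τ * u x y τ) t
    + deriv (fun s => h s y t * u s y t ^ 2 + g / 2 * h s y t ^ 2) x
    + deriv (fun s => h x s t * u x s t * v x s t) y
    = -(g * h x y t * deriv (fun s => b s y) x)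
  momentum_y : deriv (fun τ => h x y τ * v x y τ) t
    + deriv (fun s => h s y t * u s y t * v s y t) x
    + deriv (fun s => h x s t * v x s t ^ 2 + g / 2 * h x s t ^ 2) y
    = -(g * h x y t * deriv (fun s => b x s) y)

section Slices

variable {f : ℝ → ℝ → ℝ → ℝ} {x y t : ℝ}

theorem differentiableAt_slice_fst (hf : DifferentiableAt ℝ ↿f (x, y, t)) :
    DifferentiableAt ℝ (fun s => f s y t) x :=
  hf.comp (f := fun s => (s, y, t)) x (by fun_prop)

theorem differentiableAt_slice_snd (hf : DifferentiableAt ℝ ↿f (x, y, t)) :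
    DifferentiableAt ℝ (fun s => f x s t) y :=
  hf.comp (f := fun s => (x, s, t)) y (by fun_prop)

theorem differentiableAt_slice_thd (hf : DifferentiableAt ℝ ↿f (x, y, t)) :
    DifferentiableAt ℝ (fun τ => f x y τ) t :=
  hf.comp (f := fun τ => (x, y, τ)) t (by fun_prop)

end Slices

theorem IsShallowWaterSolutionAt.of_advective {g : ℝ} {b : ℝ → ℝ → ℝ} {h u v : ℝ → ℝ → ℝ → ℝ}
    {x y t : ℝ} (hb : DifferentiableAt ℝ ↿b (x, y)) (hh : DifferentiableAt ℝ ↿h (x, y, t))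
    (hu : DifferentiableAt ℝ ↿u (x, y, t)) (hv : DifferentiableAt ℝ ↿v (x, y, t))
    (mass : deriv (fun τ => h x y τ) t
      + u x y t * deriv (fun s => h s y t) x + v x y t * deriv (fun s => h x s t) y
      + h x y t * (deriv (fun s => u s y t) x + deriv (fun s => v x s t) y) = 0)
    (acceleration_x : deriv (fun τ => u x y τ) t
      + u x y t * deriv (fun s => u s y t) x + v x y t * deriv (fun s => u x s t) y
      = -g * (deriv (fun s => h s y t) x + deriv (fun s => b s y) x))
    (acceleration_y : deriv (fun τ => v x y τ) t
      + u x y t * deriv (fun s => v s y t) x + v x y t * deriv (fun s => v x s t) y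
      = -g * (deriv (fun s => h x s t) y + deriv (fun s => b x s) y)) :
    IsShallowWaterSolutionAt g b h u v x y t := by
  have hh_x := (differentiableAt_slice_fst hh).hasDerivAt
  have hh_y := (differentiableAt_slice_snd hh).hasDerivAt
  have hh_t := (differentiableAt_slice_thd hh).hasDerivAt
  have hu_x := (differentiableAt_slice_fst hu).hasDerivAt
  have hu_y := (differentiableAt_slice_snd hu).hasDerivAt
  have hu_t := (differentiableAt_slice_thd hu).hasDerivAt
  have hv_x := (differentiableAt_slice_fst hv).hasDerivAt
  have hv_y := (differentiableAt_slice_snd hv).hasDerivAt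
  have hv_t := (differentiableAt_slice_thd hv).hasDerivAt
  refine ⟨hb, hh, hu, hv, ?_, ?_, ?_⟩
  · rw [(hh_x.fun_mul hu_x).deriv, (hh_y.fun_mul hv_y).deriv]
    linear_combination mass
  · rw [(hh_t.fun_mul hu_t).deriv,
      ((hh_x.fun_mul (hu_x.fun_pow 2)).fun_add ((hh_x.fun_pow 2).const_mul (g / 2))).deriv,
      ((hh_y.fun_mul hu_y).fun_mul hv_y).deriv]
    linear_combination h x y t * acceleration_x + u x y t * mass
  · rw [(hh_t.fun_mul hv_t).deriv, ((hh_x.fun_mul hu_x).fun_mul hv_x).deriv,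
      ((hh_y.fun_mul (hv_y.fun_pow 2)).fun_add ((hh_y.fun_pow 2).const_mul (g / 2))).deriv]
    linear_combination h x y t * acceleration_y + v x y t * mass

/-- The equations of motion, at time `t`, of a fluid of depth `P - Q r²` and velocity `K (x, y)`
over the bathymetry `β r²`. -/
structure IsParabolicFlowAt (g β : ℝ) (P Q K : ℝ → ℝ) (t : ℝ) : Prop where
  hasDerivAt_central_depth : HasDerivAt P (-2 * K t * P t) t
  hasDerivAt_curvature : HasDerivAt Q (-4 * K t * Q t) t
  hasDerivAt_expansion_rate : HasDerivAt K (2 * g * (Q t - β) - K t ^ 2) t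

namespace IsParabolicFlowAt

variable {g β : ℝ} {P Q K : ℝ → ℝ} {t : ℝ}

theorem isShallowWaterSolutionAt (flow : IsParabolicFlowAt g β P Q K t) (x y : ℝ) :
    IsShallowWaterSolutionAt g (fun x y => β * (x ^ 2 + y ^ 2))
      (fun x y t => P t - Q t * (x ^ 2 + y ^ 2)) (fun x _ t => K t * x) (fun _ y t => K t * y)
      x y t := by
  obtain ⟨hP, hQ, hK⟩ := flow
  have hr_x : HasDerivAt (fun s => s ^ 2 + y ^ 2) (2 * x) x := by
    simpa using (hasDerivAt_pow 2 x).add_const (y ^ 2)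
  have hr_y : HasDerivAt (fun s => x ^ 2 + s ^ 2) (2 * y) y := by
    simpa using (hasDerivAt_pow 2 y).const_add (x ^ 2)
  have depth_t := hP.fun_sub (hQ.mul_const (x ^ 2 + y ^ 2))
  have depth_x := (hr_x.const_mul (Q t)).const_sub (P t)
  have depth_y := (hr_y.const_mul (Q t)).const_sub (P t)
  have hP' := hP.differentiableAt
  have hQ' := hQ.differentiableAt
  have hK' := hK.differentiableAt
  refine .of_advective (by fun_prop) (by fun_prop) (by fun_prop) (by fun_prop) ?_ ?_ ?_
  · rw [depth_t.deriv, depth_x.deriv, depth_y.deriv, deriv_const_mul_id, deriv_const_mul_id]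
    ring
  · rw [(hK.mul_const x).deriv, deriv_const_mul_id, deriv_const, depth_x.deriv,
      (hr_x.const_mul β).deriv]
    ring
  · rw [(hK.mul_const y).deriv, deriv_const_mul_id, deriv_const, depth_y.deriv,
      (hr_y.const_mul β).deriv]
    ring

theorem of_scale {q c D'' : ℝ} {D D' : ℝ → ℝ} (hD : HasDerivAt D (D' t) t)
    (hD' : HasDerivAt D' D'' t) (hD₀ : D t ≠ 0)
    (scale_equation : 2 * D t * D'' = D' t ^ 2 + 8 * g * (q - β * D t ^ 2)) :
    IsParabolicFlowAt g β (fun τ => c / D τ) (fun τ => q / D τ ^ 2) (fun τ => D' τ / (2 * D τ))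
      t where
  hasDerivAt_central_depth := by
    refine ((hasDerivAt_const t c).fun_div hD hD₀).congr_deriv ?_
    field_simp
    ring
  hasDerivAt_curvature := by
    refine ((hasDerivAt_const t q).fun_div (hD.fun_pow 2) (pow_ne_zero 2 hD₀)).congr_deriv ?_
    field_simp
    ring
  hasDerivAt_expansion_rate := by
    refine (hD'.fun_div (hD.const_mul 2) (mul_ne_zero two_ne_zero hD₀)).congr_deriv ?_
    field_simp
    linear_combination scale_equation

end IsParabolicFlowAt

theorem hasDerivAt_one_sub_mul_cos (A ω t : ℝ) :
    HasDerivAt (fun τ => 1 - A * Real.cos (ω * τ)) (ω * A * Real.sin (ω * t)) t :=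
  (((hasDerivAt_const_mul ω).cos.const_mul A).const_sub 1).congr_deriv (by ring)

theorem hasDerivAt_mul_sin (A ω t : ℝ) :
    HasDerivAt (fun τ => ω * A * Real.sin (ω * τ)) (ω ^ 2 * A * Real.cos (ω * t)) t :=
  ((hasDerivAt_const_mul ω).sin.const_mul (ω * A)).congr_deriv (by ring)

theorem one_sub_mul_cos_pos {A : ℝ} (hA : |A| < 1) (θ : ℝ) : 0 < 1 - A * Real.cos θ := by
  have : |A * Real.cos θ| < 1 := by
    rw [abs_mul]
    exact mul_lt_one_of_nonneg_of_lt_one_left (abs_nonneg A) hA (Real.abs_cos_le_one θ)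
  linarith [lt_of_abs_lt this]

theorem abs_sub_div_add_lt_one {p q : ℝ} (hp : 0 < p) (hq : 0 < q) : |(p - q) / (p + q)| < 1 := by
  have hpq : 0 < p + q := add_pos hp hq
  rw [abs_div, abs_of_pos hpq, div_lt_one hpq, abs_lt]
  constructor <;> linarith

theorem thacker_long_wave_resonance_exact_solution_general {g H₀ a A ω c t : ℝ} (ha : a ≠ 0)
    (hω : (ω * a) ^ 2 = 8 * g * H₀) (hD : 1 - A * Real.cos (ω * t) ≠ 0) (x y : ℝ) :
    let D : ℝ → ℝ := fun t => 1 - A * Real.cos (ω * t)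
    IsShallowWaterSolutionAt g (fun x y => H₀ * (x ^ 2 + y ^ 2) / a ^ 2)
      (fun x y t => H₀ * (c / D t - (x ^ 2 + y ^ 2) * (1 - A ^ 2) / (a ^ 2 * D t ^ 2)))
      (fun x _ t => ω * A * Real.sin (ω * t) / (2 * D t) * x)
      (fun _ y t => ω * A * Real.sin (ω * t) / (2 * D t) * y) x y t := by
  intro D
  have hω' : ω ^ 2 = 8 * g * (H₀ / a ^ 2) := by
    field_simp
    linear_combination hω
  have scale_equation : 2 * D t * (ω ^ 2 * A * Real.cos (ω * t))
      = (ω * A * Real.sin (ω * t)) ^ 2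
        + 8 * g * (H₀ / a ^ 2 * (1 - A ^ 2) - H₀ / a ^ 2 * D t ^ 2) := by
    linear_combination (1 - A ^ 2 - D t ^ 2) * hω'
      - ω ^ 2 * A ^ 2 * Real.sin_sq_add_cos_sq (ω * t)
  have flow := IsParabolicFlowAt.of_scale (c := H₀ * c) (hasDerivAt_one_sub_mul_cos A ω t)
    (hasDerivAt_mul_sin A ω t) hD scale_equation
  convert flow.isShallowWaterSolutionAt x y using 1
  · ext x y
    ring
  · ext x y t
    simp only [D, div_eq_mul_inv, mul_inv]
    ring

/-- Thacker's radially symmetric long-wave resonance solution in a paraboloid basin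
is an exact solution of the two-dimensional shallow water equations in the wet
region: with `A = (a⁴ − r₀⁴)/(a⁴ + r₀⁴)`, `ω = √(8 g H₀)/a`, `D t = 1 − A cos ωt`,
bathymetry `b = H₀ (x² + y²)/a²`, depth
`h = H₀ (√(1 − A²)/D − (x² + y²)(1 − A²)/(a² D²))` and velocity
`(u,v) = (ω A sin ωt)/(2 D) · (x, y)`, the shallow water equations hold at every
point `(x,y,t)` where `h > 0`. -/
theorem thacker_long_wave_resonance_exact_solution
    (g H₀ r₀ a : ℝ) (hg : 0 < g) (hH₀ : 0 < H₀) (hr₀ : 0 < r₀) (hra : r₀ < a) :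
    let A : ℝ := (a ^ 4 - r₀ ^ 4) / (a ^ 4 + r₀ ^ 4)
    let ω : ℝ := Real.sqrt (8 * g * H₀) / a
    let D : ℝ → ℝ := fun t => 1 - A * Real.cos (ω * t)
    let b : ℝ → ℝ → ℝ := fun x y => H₀ * (x ^ 2 + y ^ 2) / a ^ 2
    let h : ℝ → ℝ → ℝ → ℝ := fun x y t =>
      H₀ * (Real.sqrt (1 - A ^ 2) / D t
        - (x ^ 2 + y ^ 2) * (1 - A ^ 2) / (a ^ 2 * (D t) ^ 2))
    let u : ℝ → ℝ → ℝ := fun x t => ω * A * Real.sin (ω * t) / (2 * D t) * x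
    let v : ℝ → ℝ → ℝ := fun y t => ω * A * Real.sin (ω * t) / (2 * D t) * y
    ∀ x y t : ℝ, 0 < h x y t →
      -- mass equation: ∂ₜh + ∂ₓ(hu) + ∂_y(hv) = 0
      (deriv (fun τ => h x y τ) t
        + deriv (fun s => h s y t * u s t) x
        + deriv (fun s => h x s t * v s t) y = 0) ∧
      -- x-momentum: ∂ₜ(hu) + ∂ₓ(hu² + (g/2)h²) + ∂_y(huv) = −g h ∂ₓb
      (deriv (fun τ => h x y τ * u x τ) t
        + deriv (fun s => h s y t * (u s t) ^ 2 + g / 2 * (h s y t) ^ 2) x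
        + deriv (fun s => h x s t * u x t * v s t) y
        = -(g * h x y t * deriv (fun s => b s y) x)) ∧
      -- y-momentum: ∂ₜ(hv) + ∂ₓ(huv) + ∂_y(hv² + (g/2)h²) = −g h ∂_y b
      (deriv (fun τ => h x y τ * v y τ) t
        + deriv (fun s => h s y t * u s t * v y t) x
        + deriv (fun s => h x s t * (v s t) ^ 2 + g / 2 * (h x s t) ^ 2) y
        = -(g * h x y t * deriv (fun s => b x s) y)) := by
  intro A ω D b h u v x y t _
  have ha : 0 < a := hr₀.trans hra
  have hA : |A| < 1 := abs_sub_div_add_lt_one (pow_pos ha 4) (pow_pos hr₀ 4)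
  have hω : (ω * a) ^ 2 = 8 * g * H₀ := by
    rw [div_mul_cancel₀ _ ha.ne', Real.sq_sqrt (by positivity)]
  have sol := thacker_long_wave_resonance_exact_solution_general (c := √(1 - A ^ 2)) ha.ne' hω
    (one_sub_mul_cos_pos hA (ω * t)).ne' x y
  exact ⟨sol.mass, sol.momentum_x, sol.momentum_y⟩
end
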